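/- arXiv:1303.4040 — 2 statements merged into one kernel-verified Lean document; each statement's English description precedes it below -/
import Mathlib

section
/- Let α₁, …, α_M be pairwise distinct complex numbers with Re α_m > 0 and let P₁, …, P_M be nonzero polynomials with complex coefficients such that the function h(t) = Σ_{m=1}^M P_m(t) e^{-α_m t} is real-valued for all t > 0. Then Q_h[f] ≥ 0 for all f ∈ C_c^∞((0,∞)) if and only if every α_m is a positive real number and every P_m is a constant polynomial equal to a positive real number. Likewise, Q_h[f] ≤ 0 for all f ∈ C_c^∞((0,∞)) if and only if every α_m is a positive real number and every P_m is a constant polynomial equal to a negative real number. -/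
open MeasureTheory
open scoped ComplexOrder

noncomputable section

/-- Complex-valued test functions: smooth, compactly supported, support inside `(0,∞)`. -/
def IsTestFun (f : ℝ → ℂ) : Prop :=
  ContDiff ℝ (⊤ : ℕ∞) f ∧ HasCompactSupport f ∧ tsupport f ⊆ Set.Ioi 0

/-- The Hankel quadratic form `Q_h[f] = ∫₀^∞∫₀^∞ h(t+s) f(s) conj(f(t)) ds dt`. -/
def hankelQF (h : ℝ → ℂ) (f : ℝ → ℂ) : ℂ :=
  ∫ t in Set.Ioi (0:ℝ), ∫ s in Set.Ioi (0:ℝ), h (t + s) * f s * (starRingEnd ℂ) (f t)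

/-!
Expanding `P_m(t + s)` in powers of `t` turns `Q_h[f]` into `B(f, f)`, where `B` is a sesquilinear
form of finite rank in the moments `ℓ_{β,k}(f) = ∫₀^∞ s^k e^{-βs} f(s) ds`:
`B(u, g)` is a sum of terms
`conj (ℓ_{conj α_m, j}(u)) * ∫₀^∞ (P_m^{(j)}(s) / j!) e^{-α_m s} g(s) ds` with `j ≤ d_m = deg P_m`.
The functions `s^k e^{-βs}` are linearly independent, being generalized eigenvectors of `d/ds`, and
hence so are the moments; so some `u` has `ℓ_{conj α_m, d_m}(u) = 1` while any finitely many other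
prescribed moments vanish. For such `u`, `B(u, g) = c ℓ_{α_m, 0}(g)` with `c ≠ 0` the leading
coefficient of `P_m`. If `(α_m, 0) ≠ (conj α_m, d_m)`, then `u` can be chosen with `B(u, u) = 0`,
and positivity of `B` would force `B(u, ·) = 0`, which is absurd. So `α_m` is real, `d_m = 0`, and
`c = B(u, u) ≥ 0`.
-/

open TopologicalSpace
open scoped ComplexConjugate Distributions Polynomial Topology

section Duality

lemma exists_apply_eq_one_of_linearIndependent {K V ι : Type*} [Field K] [AddCommGroup V]
    [Module K V] {ℓ : ι → Module.Dual K V} (hℓ : LinearIndependent K ℓ) (s : Finset ι) (i : ι) :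
    ∃ v, ℓ i v = 1 ∧ ∀ j ∈ s, j ≠ i → ℓ j v = 0 := by
  obtain ⟨v, hv, hvs⟩ : ∃ v, ℓ i v ≠ 0 ∧ ∀ j ∈ s, j ≠ i → ℓ j v = 0 := by
    by_contra! h
    refine hℓ.notMem_span_image (s := {j | j ∈ s ∧ j ≠ i}) (fun hi => hi.2 rfl) ?_
    have : Finite {j | j ∈ s ∧ j ≠ i} := (s.finite_toSet.subset fun _ hj => hj.1).to_subtype
    rw [Set.image_eq_range]
    refine mem_span_of_iInf_ker_le_ker fun v hv => ?_
    by_contra hne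
    obtain ⟨j, hj, hji, hjv⟩ := h v hne
    simp only [Submodule.mem_iInf, LinearMap.mem_ker] at hv
    exact hjv (hv ⟨j, hj, hji⟩)
  exact ⟨(ℓ i v)⁻¹ • v, by simp [hv], fun j hj hji => by simp [hvs j hj hji]⟩

lemma eq_zero_of_forall_nonneg_add_ofReal_mul {a b : ℂ} (h : ∀ r : ℝ, 0 ≤ a + r * b) : b = 0 := by
  simp only [Complex.nonneg_iff, Complex.add_re, Complex.add_im, Complex.re_ofReal_mul,
    Complex.im_ofReal_mul] at h
  refine Complex.ext ?_ ?_
  · by_contra hb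
    have := (h (-(a.re + 1) / b.re)).1
    rw [div_mul_cancel₀ _ hb] at this
    linarith
  · rw [Complex.zero_im]
    linarith [(h 0).2, (h 1).2]

lemma apply_eq_zero_of_isNonneg {V : Type*} [AddCommGroup V] [Module ℂ V]
    {B : V →ₗ⋆[ℂ] V →ₗ[ℂ] ℂ} (hB : B.IsNonneg) {u : V} (hu : B u u = 0) (v : V) :
    B u v = 0 := by
  have expand (w : ℂ) : w * B v u + conj w * B u v = 0 := by
    refine eq_zero_of_forall_nonneg_add_ofReal_mul (a := B v v) fun r => ?_
    have := hB.nonneg (v + ((r : ℂ) * w) • u)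
    simp only [map_add, LinearMap.add_apply, map_smul, LinearMap.map_smulₛₗ, LinearMap.smul_apply,
      hu, smul_eq_mul, map_mul, Complex.conj_ofReal] at this
    convert this using 1
    ring
  have h1 := expand 1
  have hI := expand Complex.I
  rw [map_one] at h1
  rw [Complex.conj_I] at hI
  linear_combination h1 / 2 + Complex.I / 2 * hI - (B v u - B u v) / 2 * Complex.I_sq

end Duality

section ExpPoly

/-- The exponential polynomial `Σ_{i ∈ S} P_i(z) e^{-α_i z}`. -/
def expPoly {ι : Type*} (S : Finset ι) (α : ι → ℂ) (P : ι → ℂ[X]) (z : ℂ) : ℂ :=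
  ∑ i ∈ S, (P i).eval z * Complex.exp (-(α i) * z)

/-- The space of entire functions, on which differentiation acts as an endomorphism. -/
def entireFunctions : Submodule ℂ (ℂ → ℂ) where
  carrier := {f | Differentiable ℂ f}
  add_mem' hf hg := hf.add hg
  zero_mem' := differentiable_const 0
  smul_mem' c _ hf := hf.const_smul c

/-- Differentiation of entire functions. -/
def entireDeriv : Module.End ℂ entireFunctions where
  toFun f := ⟨deriv f, f.2.deriv⟩
  map_add' f g := Subtype.ext <| funext fun z => deriv_add (f.2 z) (g.2 z)
  map_smul' c f := Subtype.ext <| funext fun z => deriv_const_smul c (f.2 z)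

/-- The entire function `p(z) e^{-βz}`. -/
def polyMulExp (β : ℂ) (p : ℂ[X]) : entireFunctions :=
  ⟨fun z => p.eval z * Complex.exp (-β * z),
    p.differentiable.mul ((differentiable_id.const_mul _).cexp)⟩

lemma entireDeriv_sub_smul_polyMulExp (β : ℂ) (p : ℂ[X]) :
    (entireDeriv - (-β) • 1) (polyMulExp β p) = polyMulExp β p.derivative := by
  ext z
  have hderiv := (p.hasDerivAt z).mul (((hasDerivAt_id z).const_mul (-β)).cexp)
  simp only [entireDeriv, polyMulExp, LinearMap.sub_apply, LinearMap.smul_apply,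
    Module.End.one_apply, Submodule.coe_sub, Submodule.coe_smul, LinearMap.coe_mk, AddHom.coe_mk,
    Pi.sub_apply, Pi.smul_apply, smul_eq_mul]
  rw [show deriv (fun z => p.eval z * Complex.exp (-β * z)) z = _ from hderiv.deriv, id]
  ring

lemma polyMulExp_mem_maxGenEigenspace (β : ℂ) (p : ℂ[X]) :
    polyMulExp β p ∈ entireDeriv.maxGenEigenspace (-β) := by
  rw [Module.End.mem_maxGenEigenspace]
  have hpow (n : ℕ) : ((entireDeriv - (-β) • 1) ^ n) (polyMulExp β p) =
      polyMulExp β (Polynomial.derivative^[n] p) := by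
    induction n with
    | zero => rfl
    | succ n ih =>
      rw [pow_succ', Module.End.mul_apply, ih, entireDeriv_sub_smul_polyMulExp,
        Function.iterate_succ_apply']
  refine ⟨p.natDegree + 1, ?_⟩
  rw [hpow, Polynomial.iterate_derivative_eq_zero p.natDegree.lt_succ_self]
  ext z
  simp [polyMulExp]

lemma eq_zero_of_polyMulExp_eq_zero {β : ℂ} {p : ℂ[X]} (h : polyMulExp β p = 0) : p = 0 := by
  refine Polynomial.funext fun z => ?_
  have := congrFun (congrArg Subtype.val h) z
  simpa [polyMulExp] using this

lemma differentiable_expPoly {ι : Type*} (S : Finset ι) (α : ι → ℂ) (P : ι → ℂ[X]) :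
    Differentiable ℂ (expPoly S α P) :=
  Differentiable.fun_sum fun i _ => (polyMulExp (α i) (P i)).2

lemma eq_zero_of_expPoly_eqOn_zero {ι : Type*} {S : Finset ι} {α : ι → ℂ} (hα : Set.InjOn α S)
    {P : ι → ℂ[X]} (h : ∀ t : ℝ, 0 < t → expPoly S α P t = 0) : ∀ i ∈ S, P i = 0 := by
  have hentire : expPoly S α P = 0 := by
    have hd := differentiable_expPoly S α P
    refine AnalyticOnNhd.eq_of_frequently_eq (z₀ := 1) (fun z _ => hd.analyticAt z)
      (fun z _ => analyticAt_const) ?_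
    have htendsto : Filter.Tendsto Complex.ofReal (𝓝[≠] 1) (𝓝[≠] 1) :=
      (Complex.continuous_ofReal.tendsto' 1 1 rfl).inf (by simp)
    refine htendsto.frequently (Filter.Eventually.frequently ?_)
    filter_upwards [mem_nhdsWithin_of_mem_nhds (lt_mem_nhds one_pos)] with t ht using h t ht
  have hsum : ∑ i : S, polyMulExp (α i) (P i) = 0 := by
    ext z
    have := congrFun hentire z
    rw [expPoly, ← Finset.sum_coe_sort] at this
    simpa [polyMulExp] using this
  have hindep := entireDeriv.independent_maxGenEigenspace.comp
    (neg_injective.comp hα.injective)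
  intro i hi
  exact eq_zero_of_polyMulExp_eq_zero <|
    (iSupIndep_iff_finsetSum_eq_zero_imp_eq_zero _).1 hindep Finset.univ _
      (fun j _ => polyMulExp_mem_maxGenEigenspace (α j) (P j)) hsum ⟨i, hi⟩ (Finset.mem_univ _)

end ExpPoly

section TestFunctions

variable {E 𝕜 : Type*} [NormedAddCommGroup E] [NormedSpace ℝ E] [MeasurableSpace E]
  [BorelSpace E] {μ : Measure E} {Ω : Opens E} [RCLike 𝕜]

lemma integrable_mul_testFunction [IsLocallyFiniteMeasure μ] {n : ℕ∞} {g : E → 𝕜}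
    (hg : Continuous g) (φ : 𝓓^{n}(Ω, 𝕜)) : Integrable (fun x => g x * φ x) μ :=
  (hg.mul φ.continuous).integrable_of_hasCompactSupport φ.hasCompactSupport.mul_left

lemma eqOn_zero_of_setIntegral_mul_testFunction_eq_zero [FiniteDimensional ℝ E]
    [μ.IsOpenPosMeasure] [IsLocallyFiniteMeasure μ] {g : E → 𝕜} (hg : ContinuousOn g Ω)
    (h : ∀ φ : 𝓓(Ω, 𝕜), ∫ x in Ω, g x * φ x ∂μ = 0) : Set.EqOn g 0 Ω := by
  have hae : ∀ᵐ x ∂μ, x ∈ (Ω : Set E) → g x = 0 := by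
    refine Ω.isOpen.ae_eq_zero_of_integral_contDiff_smul_eq_zero
      (hg.locallyIntegrableOn Ω.isOpen.measurableSet) fun φ hφ hφc hφΩ => ?_
    have hzero := h (TestFunction.postcompCLM (RCLike.ofRealCLM (K := 𝕜)) ⟨φ, hφ, hφc, hφΩ⟩)
    rw [setIntegral_eq_integral_of_forall_compl_eq_zero] at hzero
    · simpa [RCLike.real_smul_eq_coe_mul, mul_comm] using hzero
    · intro x hx
      simp [image_eq_zero_of_notMem_tsupport fun hx' => hx (hφΩ hx')]
  exact Measure.eqOn_open_of_ae_eq ((ae_restrict_iff' Ω.isOpen.measurableSet).2 hae)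
    Ω.isOpen hg continuousOn_const

end TestFunctions

section Moments

/-- The open half-line `(0, ∞)`, which carries the test functions. -/
abbrev halfLine : Opens ℝ := ⟨Set.Ioi 0, isOpen_Ioi⟩

lemma integrable_eval_mul_exp_mul (β : ℂ) (p : ℂ[X]) (f : 𝓓(halfLine, ℂ)) :
    Integrable fun s : ℝ => p.eval (s : ℂ) * Complex.exp (-β * s) * f s :=
  integrable_mul_testFunction (by fun_prop) f

/-- The moment `∫₀^∞ p(s) e^{-βs} f(s) ds`, linear in both the polynomial `p` and the test
function `f`. -/
def expMoment (β : ℂ) : ℂ[X] →ₗ[ℂ] Module.Dual ℂ 𝓓(halfLine, ℂ) :=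
  LinearMap.mk₂ ℂ (fun p f => ∫ s in Set.Ioi (0 : ℝ), p.eval (s : ℂ) * Complex.exp (-β * s) * f s)
    (fun p q f => by
      simp only [Polynomial.eval_add, add_mul]
      exact integral_add (integrable_eval_mul_exp_mul β p f).integrableOn
        (integrable_eval_mul_exp_mul β q f).integrableOn)
    (fun c p f => by
      simp only [Polynomial.eval_smul, smul_eq_mul, mul_assoc, integral_const_mul])
    (fun p f g => by
      simp only [add_apply, mul_add]
      exact integral_add (integrable_eval_mul_exp_mul β p f).integrableOn
        (integrable_eval_mul_exp_mul β p g).integrableOn)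
    (fun c p f => by
      simp only [smul_apply, smul_eq_mul, mul_left_comm _ c, integral_const_mul])

lemma expMoment_apply (β : ℂ) (p : ℂ[X]) (f : 𝓓(halfLine, ℂ)) :
    expMoment β p f = ∫ s in Set.Ioi (0 : ℝ), p.eval (s : ℂ) * Complex.exp (-β * s) * f s :=
  rfl

lemma sum_expMoment_apply {ι : Type*} (S : Finset ι) (α : ι → ℂ) (P : ι → ℂ[X])
    (f : 𝓓(halfLine, ℂ)) :
    ∑ i ∈ S, expMoment (α i) (P i) f = ∫ s in Set.Ioi (0 : ℝ), expPoly S α P s * f s := by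
  simp only [expMoment_apply, expPoly, Finset.sum_mul]
  exact (integral_finsetSum _ fun i _ => (integrable_eval_mul_exp_mul _ _ f).integrableOn).symm

lemma injective_lsum_expMoment : Function.Injective (Finsupp.lsum ℂ expMoment) := by
  refine (injective_iff_map_eq_zero _).2 fun p hp => ?_
  have hint (f : 𝓓(halfLine, ℂ)) :
      ∫ s in Set.Ioi (0 : ℝ), expPoly p.support id p s * f s = 0 := by
    rw [← sum_expMoment_apply]
    simpa [Finsupp.sum] using LinearMap.congr_fun hp f
  have hcont : Continuous fun t : ℝ => expPoly p.support id p t :=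
    (differentiable_expPoly _ _ _).continuous.comp Complex.continuous_ofReal
  have hzero := eqOn_zero_of_setIntegral_mul_testFunction_eq_zero hcont.continuousOn hint
  have hp := eq_zero_of_expPoly_eqOn_zero Function.injective_id.injOn hzero
  ext1 β
  by_cases hβ : β ∈ p.support
  · exact hp β hβ
  · exact Finsupp.notMem_support_iff.1 hβ

lemma linearIndependent_expMoment :
    LinearIndependent ℂ fun i : ℂ × ℕ => expMoment i.1 (Polynomial.X ^ i.2) := by
  let b := Finsupp.basis fun _ : ℂ => Polynomial.basisMonomials ℂ
  have hb := b.linearIndependent.map_injOn _ injective_lsum_expMoment.injOn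
  convert hb.comp (Equiv.sigmaEquivProd ℂ ℕ).symm (Equiv.injective _) using 2
  simp [b, Polynomial.X_pow_eq_monomial]

end Moments

section HankelForm

lemma integral_integral_sum_mul {ι X Y 𝕜 : Type*} [RCLike 𝕜] [MeasurableSpace X]
    [MeasurableSpace Y] {μ : Measure X} {ν : Measure Y} (T : Finset ι) {F : ι → X → 𝕜}
    {G : ι → Y → 𝕜} (hF : ∀ i ∈ T, Integrable (F i) μ) (hG : ∀ i ∈ T, Integrable (G i) ν) :
    ∫ y, ∫ x, ∑ i ∈ T, G i y * F i x ∂μ ∂ν = ∑ i ∈ T, (∫ y, G i y ∂ν) * ∫ x, F i x ∂μ := by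
  have hinner (y : Y) : ∫ x, ∑ i ∈ T, G i y * F i x ∂μ = ∑ i ∈ T, G i y * ∫ x, F i x ∂μ := by
    rw [integral_finsetSum T fun i hi => (hF i hi).const_mul _]
    simp only [integral_const_mul]
  simp only [hinner]
  rw [integral_finsetSum T fun i hi => (hG i hi).mul_const _]
  simp only [integral_mul_const]

lemma eval_add_eq_sum_hasseDeriv {R : Type*} [CommSemiring R] (p : R[X]) (x y : R) :
    p.eval (x + y) =
      ∑ j ∈ Finset.range (p.natDegree + 1), x ^ j * (Polynomial.hasseDeriv j p).eval y := by
  rw [← Polynomial.taylor_eval, Polynomial.eval_eq_sum_range, Polynomial.natDegree_taylor]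
  simp only [Polynomial.taylor_coeff, mul_comm]

variable {ι : Type*} {S : Finset ι} {α : ι → ℂ} {P : ι → ℂ[X]}

/-- The sesquilinear form of the Hankel operator with kernel `expPoly S α P`, written as the
finite-rank form in the moments of its arguments which the Taylor expansion of `P_m(t + s)` in `t`
gives. -/
def hankelForm (S : Finset ι) (α : ι → ℂ) (P : ι → ℂ[X]) :
    𝓓(halfLine, ℂ) →ₗ⋆[ℂ] 𝓓(halfLine, ℂ) →ₗ[ℂ] ℂ :=
  LinearMap.mk₂'ₛₗ (starRingEnd ℂ) (RingHom.id ℂ)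
    (fun f g => ∑ m ∈ S, ∑ j ∈ Finset.range ((P m).natDegree + 1),
      conj (expMoment (conj (α m)) (Polynomial.X ^ j) f) *
        expMoment (α m) (Polynomial.hasseDeriv j (P m)) g)
    (by simp [add_mul, Finset.sum_add_distrib])
    (by simp [mul_assoc, Finset.mul_sum])
    (by simp [mul_add, Finset.sum_add_distrib])
    (by simp [mul_left_comm, Finset.mul_sum])

lemma hankelForm_apply (f g : 𝓓(halfLine, ℂ)) :
    hankelForm S α P f g = ∑ m ∈ S, ∑ j ∈ Finset.range ((P m).natDegree + 1),
      conj (expMoment (conj (α m)) (Polynomial.X ^ j) f) *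
        expMoment (α m) (Polynomial.hasseDeriv j (P m)) g :=
  rfl

lemma hankelQF_expPoly (f : 𝓓(halfLine, ℂ)) :
    hankelQF (fun t => expPoly S α P t) f = hankelForm S α P f f := by
  let T := S.sigma fun m => Finset.range ((P m).natDegree + 1)
  have hkernel (t s : ℝ) : expPoly S α P (t + s : ℝ) * f s * conj (f t) =
      ∑ x ∈ T, conj ((Polynomial.X ^ x.2 : ℂ[X]).eval (t : ℂ) *
          Complex.exp (-conj (α x.1) * t) * f t) *
        ((Polynomial.hasseDeriv x.2 (P x.1)).eval (s : ℂ) * Complex.exp (-α x.1 * s) * f s) := by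
    simp only [T, Finset.sum_sigma, expPoly, Complex.ofReal_add, eval_add_eq_sum_hasseDeriv,
      mul_add, Complex.exp_add, Finset.sum_mul]
    refine Finset.sum_congr rfl fun m _ => Finset.sum_congr rfl fun j _ => ?_
    simp only [Polynomial.eval_pow, Polynomial.eval_X, map_mul, map_pow, Complex.conj_ofReal,
      ← Complex.exp_conj, map_neg, Complex.conj_conj]
    ring
  have hint (β : ℂ) (p : ℂ[X]) : IntegrableOn (fun s : ℝ => p.eval (s : ℂ) *
      Complex.exp (-β * s) * f s) (Set.Ioi 0) := (integrable_eval_mul_exp_mul β p f).integrableOn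
  simp only [hankelQF, hkernel]
  rw [integral_integral_sum_mul T fun _ _ => hint _ _]
  · simp only [integral_conj, T, Finset.sum_sigma]
    rfl
  · exact fun _ _ => (LinearIsometryEquiv.integrable_comp_iff Complex.conjLIE).2 (hint _ _)

lemma hankelForm_eq_of_expMoment_eq_zero {m : ι} (hm : m ∈ S) {u : 𝓓(halfLine, ℂ)}
    (hu : expMoment (conj (α m)) (Polynomial.X ^ (P m).natDegree) u = 1)
    (hu₀ : ∀ n ∈ S, ∀ j ≤ (P n).natDegree, (n, j) ≠ (m, (P m).natDegree) →
      expMoment (conj (α n)) (Polynomial.X ^ j) u = 0) (g : 𝓓(halfLine, ℂ)) :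
    hankelForm S α P u g = (P m).leadingCoeff * expMoment (α m) 1 g := by
  rw [hankelForm_apply, Finset.sum_eq_single_of_mem m hm,
    Finset.sum_eq_single_of_mem _ (Finset.self_mem_range_succ _)]
  · rw [hu, map_one, one_mul, Polynomial.hasseDeriv_natDegree_eq_C,
      ← mul_one (Polynomial.C _), ← Polynomial.smul_eq_C_mul, map_smul, LinearMap.smul_apply,
      smul_eq_mul]
  · intro j hj hjm
    rw [hu₀ m hm j (Finset.mem_range_succ_iff.1 hj) (by simp [hjm]), map_zero, zero_mul]
  · intro n hn hnm
    refine Finset.sum_eq_zero fun j hj => ?_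
    rw [hu₀ n hn j (Finset.mem_range_succ_iff.1 hj) (by simp [hnm]), map_zero, zero_mul]

lemma exists_hankelForm_eq_leadingCoeff_mul (P : ι → ℂ[X]) (hα : Set.InjOn α S) {m : ι}
    (hm : m ∈ S) :
    ∃ u, expMoment (conj (α m)) (Polynomial.X ^ (P m).natDegree) u = 1 ∧
      ((α m, 0) ≠ (conj (α m), (P m).natDegree) → expMoment (α m) 1 u = 0) ∧
      ∀ g, hankelForm S α P u g = (P m).leadingCoeff * expMoment (α m) 1 g := by
  classical
  obtain ⟨T, hαT, hT⟩ : ∃ T : Finset (ℂ × ℕ), (α m, 0) ∈ T ∧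
      ∀ n ∈ S, ∀ j ≤ (P n).natDegree, (conj (α n), j) ∈ T :=
    ⟨insert (α m, 0) <| S.biUnion fun n =>
        {conj (α n)} ×ˢ Finset.range ((P n).natDegree + 1),
      Finset.mem_insert_self _ _, fun n hn j hj => Finset.mem_insert_of_mem <|
        Finset.mem_biUnion.2 ⟨n, hn, by simpa [Nat.lt_succ_iff] using hj⟩⟩
  obtain ⟨u, hu, hu₀⟩ := exists_apply_eq_one_of_linearIndependent linearIndependent_expMoment
    T (conj (α m), (P m).natDegree)
  refine ⟨u, hu, fun h => by simpa using hu₀ _ hαT h,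
    hankelForm_eq_of_expMoment_eq_zero hm hu fun n hn j hj hne => ?_⟩
  refine hu₀ (conj (α n), j) (hT n hn j hj) fun h => hne ?_
  obtain ⟨hnm, rfl⟩ := Prod.ext_iff.1 h
  rw [hα hn hm (star_injective hnm)]

lemma conj_eq_and_natDegree_eq_zero_of_isNonneg (hα : Set.InjOn α S)
    (hB : (hankelForm S α P).IsNonneg) {m : ι} (hm : m ∈ S) (hP : P m ≠ 0) :
    conj (α m) = α m ∧ (P m).natDegree = 0 := by
  obtain ⟨u, -, huα, hform⟩ := exists_hankelForm_eq_leadingCoeff_mul P hα hm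
  by_contra! hne
  have hisotropic : hankelForm S α P u u = 0 := by
    rw [hform, huα fun h => hne (Prod.ext_iff.1 h).1.symm (Prod.ext_iff.1 h).2.symm, mul_zero]
  obtain ⟨g, hg, -⟩ := exists_apply_eq_one_of_linearIndependent linearIndependent_expMoment
    ∅ (α m, 0)
  rw [pow_zero] at hg
  refine Polynomial.leadingCoeff_ne_zero.2 hP ?_
  rw [← apply_eq_zero_of_isNonneg hB hisotropic g, hform, hg, mul_one]

lemma leadingCoeff_pos_of_isNonneg (hα : Set.InjOn α S) (hB : (hankelForm S α P).IsNonneg)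
    {m : ι} (hm : m ∈ S) (hP : P m ≠ 0) : 0 < (P m).leadingCoeff := by
  obtain ⟨hreal, hdeg⟩ := conj_eq_and_natDegree_eq_zero_of_isNonneg hα hB hm hP
  obtain ⟨u, hu, -, hform⟩ := exists_hankelForm_eq_leadingCoeff_mul P hα hm
  rw [hreal, hdeg, pow_zero] at hu
  have hnonneg := hB.nonneg u
  rw [hform, hu, mul_one] at hnonneg
  exact hnonneg.lt_of_ne' (Polynomial.leadingCoeff_ne_zero.2 hP)

lemma isNonneg_hankelForm
    (h : ∀ m ∈ S, (∃ a : ℝ, α m = a) ∧ ∃ c : ℝ, 0 ≤ c ∧ P m = .C (c : ℂ)) :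
    (hankelForm S α P).IsNonneg := by
  refine ⟨fun f => Finset.sum_nonneg fun m hm => ?_⟩
  obtain ⟨⟨a, ha⟩, c, hc, hPm⟩ := h m hm
  rw [hPm, Polynomial.natDegree_C, zero_add, Finset.sum_range_one, ha, Complex.conj_ofReal,
    pow_zero, Polynomial.hasseDeriv_zero', ← mul_one (Polynomial.C _), ← Polynomial.smul_eq_C_mul,
    map_smul, LinearMap.smul_apply, smul_eq_mul, mul_left_comm]
  exact mul_nonneg (Complex.zero_le_real.2 hc) (star_mul_self_nonneg _)

lemma isNonneg_hankelForm_iff (hα : Set.InjOn α S) (hP : ∀ m ∈ S, P m ≠ 0) :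
    (hankelForm S α P).IsNonneg ↔
      ∀ m ∈ S, (∃ a : ℝ, α m = a) ∧ ∃ c : ℝ, 0 < c ∧ P m = .C (c : ℂ) := by
  refine ⟨fun hB m hm => ?_, fun h => isNonneg_hankelForm fun m hm =>
    (h m hm).imp_right fun ⟨c, hc, hPm⟩ => ⟨c, hc.le, hPm⟩⟩
  obtain ⟨hreal, hdeg⟩ := conj_eq_and_natDegree_eq_zero_of_isNonneg hα hB hm (hP m hm)
  obtain ⟨c, hc, hlead⟩ :=
    RCLike.pos_iff_exists_ofReal.1 (leadingCoeff_pos_of_isNonneg hα hB hm (hP m hm))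
  refine ⟨Complex.conj_eq_iff_real.1 hreal, c, hc, ?_⟩
  rw [Polynomial.eq_C_of_natDegree_eq_zero hdeg, ← hdeg]
  exact congrArg Polynomial.C hlead.symm

lemma forall_isTestFun_iff {p : (ℝ → ℂ) → Prop} :
    (∀ f, IsTestFun f → p f) ↔ ∀ f : 𝓓(halfLine, ℂ), p f :=
  ⟨fun h f => h f ⟨f.contDiff, f.hasCompactSupport, f.tsupport_subset⟩,
    fun h f hf => h ⟨f, hf.1, hf.2.1, hf.2.2⟩⟩

lemma hankelQF_expPoly_nonneg_iff (hα : Set.InjOn α S) (hP : ∀ m ∈ S, P m ≠ 0) :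
    (∀ f, IsTestFun f → 0 ≤ hankelQF (fun t => expPoly S α P t) f) ↔
      ∀ m ∈ S, (∃ a : ℝ, α m = a) ∧ ∃ c : ℝ, 0 < c ∧ P m = .C (c : ℂ) := by
  rw [← isNonneg_hankelForm_iff hα hP, forall_isTestFun_iff]
  simp only [hankelQF_expPoly]
  exact ⟨fun h => ⟨h⟩, fun h => h.nonneg⟩

lemma hankelQF_expPoly_nonpos_iff (hα : Set.InjOn α S) (hP : ∀ m ∈ S, P m ≠ 0) :
    (∀ f, IsTestFun f → hankelQF (fun t => expPoly S α P t) f ≤ 0) ↔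
      ∀ m ∈ S, (∃ a : ℝ, α m = a) ∧ ∃ c : ℝ, c < 0 ∧ P m = .C (c : ℂ) := by
  have hneg (f : ℝ → ℂ) : hankelQF (fun t => expPoly S α (-P) t) f =
      -hankelQF (fun t => expPoly S α P t) f := by
    simp only [hankelQF, expPoly, Pi.neg_apply, Polynomial.eval_neg, neg_mul,
      Finset.sum_neg_distrib, integral_neg]
  have hpos := hankelQF_expPoly_nonneg_iff hα (P := -P) fun m hm => neg_ne_zero.2 (hP m hm)
  simp only [hneg, neg_nonneg] at hpos
  rw [hpos]
  refine forall₂_congr fun m _ => and_congr_right fun _ => (Equiv.neg ℝ).exists_congr fun c => ?_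
  simp [neg_eq_iff_eq_neg]

end HankelForm

lemma exists_eq_ofReal_iff_exists_pos {z : ℂ} (hz : 0 < z.re) :
    (∃ a : ℝ, z = a) ↔ ∃ a : ℝ, 0 < a ∧ z = a :=
  exists_congr fun a => (and_iff_right_of_imp <| by rintro rfl; exact hz).symm

theorem finite_rank_hankel_sign_definite_general {ι : Type*} (S : Finset ι) (α : ι → ℂ)
    (P : ι → ℂ[X]) (hα : Set.InjOn α S) (hP : ∀ m ∈ S, P m ≠ 0) :
    ((∀ f, IsTestFun f → 0 ≤ hankelQF (fun t => expPoly S α P t) f) ↔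
      ∀ m ∈ S, (∃ a : ℝ, α m = a) ∧ ∃ c : ℝ, 0 < c ∧ P m = .C (c : ℂ)) ∧
    ((∀ f, IsTestFun f → hankelQF (fun t => expPoly S α P t) f ≤ 0) ↔
      ∀ m ∈ S, (∃ a : ℝ, α m = a) ∧ ∃ c : ℝ, c < 0 ∧ P m = .C (c : ℂ)) :=
  ⟨hankelQF_expPoly_nonneg_iff hα hP, hankelQF_expPoly_nonpos_iff hα hP⟩

/-- A finite-rank Hankel kernel `h(t) = Σ_m P_m(t) e^{-α_m t}` (real-valued on `(0,∞)`)
gives a positive (resp. negative) quadratic form iff all `α_m` are positive reals and all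
`P_m` are positive (resp. negative) real constants. -/
theorem finite_rank_hankel_sign_definite (M : ℕ) (α : ℕ → ℂ) (P : ℕ → Polynomial ℂ)
    (hdist : ∀ m < M, ∀ n < M, m ≠ n → α m ≠ α n)
    (hre : ∀ m < M, 0 < (α m).re)
    (hPne : ∀ m < M, P m ≠ 0)
    (hreal : ∀ t : ℝ, 0 < t →
      (∑ m ∈ Finset.range M, (P m).eval (t : ℂ) * Complex.exp (-(α m) * t)).im = 0) :
    ((∀ f : ℝ → ℂ, IsTestFun f →
        0 ≤ hankelQF (fun t : ℝ =>
          ∑ m ∈ Finset.range M, (P m).eval (t : ℂ) * Complex.exp (-(α m) * t)) f) ↔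
      (∀ m < M, (∃ a : ℝ, 0 < a ∧ α m = (a : ℂ)) ∧
        ∃ c : ℝ, 0 < c ∧ P m = Polynomial.C (c : ℂ)))
    ∧ ((∀ f : ℝ → ℂ, IsTestFun f →
        hankelQF (fun t : ℝ =>
          ∑ m ∈ Finset.range M, (P m).eval (t : ℂ) * Complex.exp (-(α m) * t)) f ≤ 0) ↔
      (∀ m < M, (∃ a : ℝ, 0 < a ∧ α m = (a : ℂ)) ∧
        ∃ c : ℝ, c < 0 ∧ P m = Polynomial.C (c : ℂ))) := by
  simp only [← Finset.mem_range] at *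
  have hα : Set.InjOn α (Finset.range M) := fun m hm n hn => not_imp_not.1 (hdist m hm n hn)
  have hpos (p : ℕ → Prop) : (∀ m ∈ Finset.range M, (∃ a : ℝ, α m = a) ∧ p m) ↔
      ∀ m ∈ Finset.range M, (∃ a : ℝ, 0 < a ∧ α m = a) ∧ p m :=
    forall₂_congr fun m hm => and_congr_left' (exists_eq_ofReal_iff_exists_pos (hre m hm))
  exact (finite_rank_hankel_sign_definite_general (Finset.range M) α P hα hPne).imp
    (·.trans (hpos _)) (·.trans (hpos _))
end
end

section
/- Let r > 0 and set h(t) = e^{-t^r} for t > 0. If 0 < r ≤ 1, then Q_h[f] ≥ 0 for all f ∈ C_c^∞((0,∞)). If r > 1, then the form is not sign-definite: there exist f₊, f₋ ∈ C_c^∞((0,∞)) with Q_h[f₊] > 0 and Q_h[f₋] < 0. -/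
open MeasureTheory
open scoped ComplexOrder

noncomputable section

/-!
For `0 < r < 1`, scaling gives `∫₀^∞ (1 - e^{-tx}) x^{-r-1} dx = c t^r` with `c > 0`, and expanding
`(1 - e^{-sx}) (1 - e^{-tx})` turns this into
`s^r + t^r - (s + t)^r = c⁻¹ ∫₀^∞ (1 - e^{-sx}) (1 - e^{-tx}) x^{-r-1} dx`,
a Gram matrix in `L²`; for `r = 1` the left side vanishes. By Schur's product theorem its entrywise
exponential is positive semidefinite, hence so is
`e^{-(s+t)^r} = e^{-s^r} e^{-t^r} exp (s^r + t^r - (s + t)^r)`.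

For continuous `h`, the form `Q_h` is nonnegative exactly when the matrix `h (s + t)` is positive
semidefinite. If the matrix is the Gram matrix of vectors `v s`, then `Q_h[f] = ‖∫ f(s) v(s) ds‖²`;
conversely, test functions concentrating at finitely many points recover the finite quadratic
forms. For `r > 1` the `2 × 2` minor at the points `1, 2` is negative, because strict convexity of
`t^r` gives `h 3 ^ 2 > h 2 * h 4`.
-/

section

open Set Filter Topology
open scoped InnerProductSpace ComplexConjugate

section PositiveKernels

universe u v

variable {𝕜 : Type u} {ι : Type v} [RCLike 𝕜]

theorem posSemidef_gram {E : Type*} [SeminormedAddCommGroup E] [InnerProductSpace 𝕜 E]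
    (v : ι → E) : (Matrix.gram 𝕜 v).PosSemidef := by
  refine ⟨Matrix.isHermitian_gram 𝕜 v, fun x => ?_⟩
  have h : (x.sum fun i xi => x.sum fun j xj => star xi * Matrix.gram 𝕜 v i j * xj) =
      ⟪x.sum fun i xi => xi • v i, x.sum fun i xi => xi • v i⟫_𝕜 := by
    simp only [Finsupp.sum, sum_inner, inner_sum, inner_smul_left, inner_smul_right,
      Matrix.gram_apply, RCLike.star_def]
    rw [Finset.sum_comm]
    refine Finset.sum_congr rfl fun j _ => ?_
    rw [Finset.mul_sum]
    exact Finset.sum_congr rfl fun i _ => by ring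
  rw [h, RCLike.le_iff_re_im]
  simp

theorem posSemidef_const_one : (Matrix.of fun _ _ : ι => (1 : 𝕜)).PosSemidef := by
  convert! posSemidef_gram (𝕜 := 𝕜) fun _ : ι => (1 : 𝕜)
  ext i j
  simp

theorem posSemidef_map_pow {A : Matrix ι ι 𝕜} (hA : A.PosSemidef) (n : ℕ) :
    (A.map (· ^ n)).PosSemidef := by
  induction n with
  | zero => simpa only [pow_zero] using! posSemidef_const_one
  | succ n ih => simpa only [pow_succ] using! ih.hadamard hA

theorem posSemidef_of_tendsto {α : Type*} {l : Filter α} [l.NeBot] {A : α → Matrix ι ι 𝕜}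
    {B : Matrix ι ι 𝕜} (hA : ∀ n, (A n).PosSemidef) (h : Tendsto A l (𝓝 B)) : B.PosSemidef := by
  have hij (i j : ι) : Tendsto (fun n => A n i j) l (𝓝 (B i j)) :=
    tendsto_pi_nhds.1 (tendsto_pi_nhds.1 h i) j
  refine ⟨Matrix.IsHermitian.ext fun i j => ?_, fun x => ?_⟩
  · exact tendsto_nhds_unique (hij j i).star
      ((hij i j).congr fun n => ((hA n).isHermitian.apply i j).symm)
  · exact ge_of_tendsto' (f := fun n => x.sum fun i xi => x.sum fun j xj => star xi * A n i j * xj)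
      (tendsto_finsetSum _ fun i _ => tendsto_finsetSum _ fun j _ =>
        ((hij i j).const_mul _).mul_const _) fun n => (hA n).2 x

theorem posSemidef_map_exp {A : Matrix ι ι ℂ} (hA : A.PosSemidef) :
    (A.map Complex.exp).PosSemidef := by
  refine posSemidef_of_tendsto (l := atTop)
    (A := fun n : ℕ => (Matrix.of (fun _ _ => 1) + (n : ℂ)⁻¹ • A).map (· ^ n)) (fun n => ?_) ?_
  · exact posSemidef_map_pow (posSemidef_const_one.add (hA.smul (by positivity))) n
  · refine tendsto_pi_nhds.2 fun i => tendsto_pi_nhds.2 fun j => ?_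
    simpa [div_eq_inv_mul] using Complex.tendsto_one_add_div_pow_exp (A i j)

/-- **Moore–Aronszajn theorem.** -/
theorem exists_gram_eq {A : Matrix ι ι 𝕜} (hA : A.PosSemidef) :
    ∃ (H : Type (max u v)) (_ : NormedAddCommGroup H) (_ : InnerProductSpace 𝕜 H)
      (_ : CompleteSpace H) (v : ι → H), Matrix.gram 𝕜 v = A := by
  set K : Matrix ι ι (𝕜 →L[𝕜] 𝕜) := A.map (ContinuousLinearMap.toSpanSingleton 𝕜)
  have hK : Fact K.PosSemidef := by
    refine ⟨((RKHS.posSemidef_tfae (K := K)).out 0 2 rfl rfl).2 ⟨?_, fun x => ?_⟩⟩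
    · refine Matrix.IsHermitian.ext fun i j => ?_
      refine ContinuousLinearMap.ext_ring (ext_inner_right 𝕜 fun w => ?_)
      rw [ContinuousLinearMap.star_eq_adjoint, ContinuousLinearMap.adjoint_inner_left]
      simp [K, ← hA.1.apply i j]
    · refine (RCLike.nonneg_iff.1 (hA.2 x)).1.trans_eq (congrArg RCLike.re ?_)
      refine Finset.sum_congr rfl fun i _ => Finset.sum_congr rfl fun j _ => ?_
      simp only [K, Matrix.map_apply, ← hA.1.apply i j, RCLike.star_def, RCLike.inner_apply,
        ContinuousLinearMap.toSpanSingleton_apply, smul_eq_mul, map_mul]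
      ring
  refine ⟨RKHS.OfKernel K, inferInstance, inferInstance, inferInstance,
    fun i => RKHS.kerFun (RKHS.OfKernel K) i 1, ?_⟩
  ext i j
  rw [Matrix.gram_apply, ← RKHS.kernel_inner, RKHS.OfKernel.kernel_ofKernel]
  simpa [K] using hA.1.apply i j

theorem apply_mul_apply_le_of_posSemidef {A : Matrix ι ι 𝕜} (hA : A.PosSemidef) (i j : ι) :
    A i j * A j i ≤ A i i * A j j := by
  have hdet := (hA.submatrix ![i, j]).det_nonneg
  rw [Matrix.det_fin_two] at hdet
  exact sub_nonneg.1 hdet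

end PositiveKernels

theorem continuous_of_continuous_gram {𝕜 X E : Type*} [RCLike 𝕜] [TopologicalSpace X]
    [SeminormedAddCommGroup E] [InnerProductSpace 𝕜 E] {v : X → E}
    (hv : Continuous fun p : X × X => ⟪v p.1, v p.2⟫_𝕜) : Continuous v := by
  refine continuous_iff_continuousAt.2 fun x => tendsto_iff_norm_sub_tendsto_zero.2 ?_
  have hsq (y : X) : ‖v y - v x‖ ^ 2 = RCLike.re (⟪v y, v y⟫_𝕜) - 2 * RCLike.re (⟪v y, v x⟫_𝕜)
      + RCLike.re (⟪v x, v x⟫_𝕜) := by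
    rw [norm_sub_sq (𝕜 := 𝕜), inner_self_eq_norm_sq, inner_self_eq_norm_sq]
  have hc : Continuous fun y => √(RCLike.re (⟪v y, v y⟫_𝕜) - 2 * RCLike.re (⟪v y, v x⟫_𝕜)
      + RCLike.re (⟪v x, v x⟫_𝕜)) := by
    have hdiag : Continuous fun y => ⟪v y, v y⟫_𝕜 := hv.comp (continuous_id.prodMk continuous_id)
    have hcol : Continuous fun y => ⟪v y, v x⟫_𝕜 := hv.comp (.prodMk_left x)
    fun_prop
  simpa only [← hsq, Real.sqrt_sq (norm_nonneg _), sub_self, norm_zero,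
    zero_pow two_ne_zero, Real.sqrt_zero] using hc.tendsto x

theorem integral_integral_gram_mul_nonneg {𝕜 X H : Type*} [RCLike 𝕜] [MeasurableSpace X]
    {μ : Measure X} [NormedAddCommGroup H] [InnerProductSpace 𝕜 H] [CompleteSpace H]
    [NormedSpace ℝ H] {v : X → H} {f : X → 𝕜} (h : Integrable (fun x => f x • v x) μ) :
    0 ≤ ∫ x, ∫ y, ⟪v x, v y⟫_𝕜 * f y * conj (f x) ∂μ ∂μ := by
  have hinner (x : X) : ∫ y, ⟪v x, v y⟫_𝕜 * f y * conj (f x) ∂μ =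
      ⟪f x • v x, ∫ y, f y • v y ∂μ⟫_𝕜 := by
    rw [← integral_inner h]
    simp only [inner_smul_left, inner_smul_right]
    exact integral_congr_ae (.of_forall fun y => by ring)
  have hconj : ∫ x, ⟪f x • v x, ∫ y, f y • v y ∂μ⟫_𝕜 ∂μ =
      ⟪∫ x, f x • v x ∂μ, ∫ y, f y • v y ∂μ⟫_𝕜 := by
    rw [← inner_conj_symm, ← integral_inner h, ← integral_conj]
    simp only [inner_conj_symm]
  rw [integral_congr_ae (.of_forall hinner), hconj, RCLike.nonneg_iff]
  simp

theorem integral_integral_nonneg_of_posSemidef {𝕜 X : Type*} [RCLike 𝕜] [TopologicalSpace X]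
    [MeasurableSpace X] [OpensMeasurableSpace X] {μ : Measure X} [IsFiniteMeasureOnCompacts μ]
    {K : Matrix X X 𝕜} (hK : K.PosSemidef) (hKc : Continuous fun p : X × X => K p.1 p.2)
    {f : X → 𝕜} (hf : Continuous f) (hfc : HasCompactSupport f) :
    0 ≤ ∫ x, ∫ y, K x y * f y * conj (f x) ∂μ ∂μ := by
  obtain ⟨H, _, _, _, v, rfl⟩ := exists_gram_eq hK
  let : NormedSpace ℝ H := NormedSpace.restrictScalars ℝ 𝕜 H
  exact integral_integral_gram_mul_nonneg ((hf.smul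
    (continuous_of_continuous_gram hKc)).integrable_of_hasCompactSupport hfc.smul_right)

theorem posSemidef_integral_conj_mul {𝕜 ι α : Type*} [RCLike 𝕜] [MeasurableSpace α]
    {μ : Measure α} {φ : ι → α → 𝕜} (hφ : ∀ i, MemLp (φ i) 2 μ) :
    (Matrix.of fun i j => ∫ x, conj (φ i x) * φ j x ∂μ).PosSemidef := by
  convert! posSemidef_gram (𝕜 := 𝕜) fun i => (hφ i).toLp
  ext i j
  rw [Matrix.of_apply, Matrix.gram_apply, L2.inner_def]
  refine integral_congr_ae ?_
  filter_upwards [(hφ i).coeFn_toLp, (hφ j).coeFn_toLp] with x hi hj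
  rw [hi, hj, RCLike.inner_apply, mul_comm]

section Levy

/-- The integrand in the Lévy–Khintchine representation of `t ↦ t ^ r`, where `0 < r < 1`: over
`(0, ∞)` it integrates to a positive multiple of `t ^ r`. -/
def levyIntegrand (r t x : ℝ) : ℝ := (1 - Real.exp (-(t * x))) * x ^ (-r - 1)

variable {r : ℝ}

theorem integrableOn_levyIntegrand (hr : 0 < r) (hr1 : r < 1) {t : ℝ} (ht : 0 ≤ t) :
    IntegrableOn (levyIntegrand r t) (Ioi 0) := by
  have hmeas (s : Set ℝ) : AEStronglyMeasurable (levyIntegrand r t) (volume.restrict s) :=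
    Measurable.aestronglyMeasurable (by unfold levyIntegrand; fun_prop)
  have hnear : IntegrableOn (fun x : ℝ => t * x ^ (-r)) (Ioc 0 1) :=
    ((intervalIntegral.intervalIntegrable_rpow' (by linarith)).1).const_mul t
  have hfar : IntegrableOn (fun x : ℝ => x ^ (-r - 1)) (Ioi 1) :=
    integrableOn_Ioi_rpow_of_lt (by linarith) one_pos
  rw [← Ioc_union_Ioi_eq_Ioi zero_le_one]
  refine .union (hnear.mono' (hmeas _) ?_) (hfar.mono' (hmeas _) ?_)
  · refine ae_restrict_of_forall_mem measurableSet_Ioc fun x hx => ?_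
    have hexp : 1 - Real.exp (-(t * x)) ≤ t * x := by linarith [Real.one_sub_le_exp_neg (t * x)]
    have hexp0 : 0 ≤ 1 - Real.exp (-(t * x)) := by
      simpa using mul_nonneg ht hx.1.le
    rw [levyIntegrand, Real.norm_of_nonneg (mul_nonneg hexp0 (Real.rpow_nonneg hx.1.le _))]
    calc (1 - Real.exp (-(t * x))) * x ^ (-r - 1)
      _ ≤ t * x * x ^ (-r - 1) := by gcongr; exact Real.rpow_nonneg hx.1.le _
      _ = t * x ^ (-r) := by rw [mul_assoc, ← Real.rpow_one_add' hx.1.le (by linarith)]; ring_nf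
  · refine ae_restrict_of_forall_mem measurableSet_Ioi fun x hx => ?_
    have hx0 : (0 : ℝ) < x := one_pos.trans hx
    have hexp0 : 0 ≤ 1 - Real.exp (-(t * x)) := by
      simpa using mul_nonneg ht hx0.le
    rw [levyIntegrand, Real.norm_of_nonneg (mul_nonneg hexp0 (Real.rpow_nonneg hx0.le _))]
    exact mul_le_of_le_one_left (Real.rpow_nonneg hx0.le _) (by linarith [Real.exp_pos (-(t * x))])

theorem integral_levyIntegrand {t : ℝ} (ht : 0 < t) :
    ∫ x in Ioi 0, levyIntegrand r t x = t ^ r * ∫ x in Ioi 0, levyIntegrand r 1 x := by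
  have hsubst := integral_comp_mul_left_Ioi (levyIntegrand r 1) 0 ht
  have hscale : ∫ x in Ioi 0, levyIntegrand r 1 (t * x) =
      t ^ (-r - 1) * ∫ x in Ioi 0, levyIntegrand r t x := by
    rw [← integral_const_mul]
    refine setIntegral_congr_fun measurableSet_Ioi fun x hx => ?_
    simp only [levyIntegrand, one_mul, Real.mul_rpow ht.le (le_of_lt hx)]
    ring
  have hpow : t ^ (-r - 1) * t ^ r = t⁻¹ := by
    rw [← Real.rpow_add ht, ← Real.rpow_neg_one]; ring_nf
  refine mul_left_cancel₀ (Real.rpow_pos_of_pos ht (-r - 1)).ne' ?_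
  rw [← hscale, hsubst, mul_zero, smul_eq_mul, ← mul_assoc, hpow]

theorem integral_levyIntegrand_one_pos (hr : 0 < r) (hr1 : r < 1) :
    0 < ∫ x in Ioi 0, levyIntegrand r 1 x := by
  have hpos : ∀ x ∈ Ioi (0 : ℝ), 0 < levyIntegrand r 1 x := fun x hx =>
    mul_pos (by simpa using hx) (Real.rpow_pos_of_pos hx _)
  have hsupp : Ioi 0 ⊆ Function.support (levyIntegrand r 1) := fun x hx => (hpos x hx).ne'
  rw [setIntegral_pos_iff_support_of_nonneg_ae
    (ae_restrict_of_forall_mem measurableSet_Ioi fun x hx => (hpos x hx).le)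
    (integrableOn_levyIntegrand hr hr1 zero_le_one), inter_eq_right.2 hsupp, Real.volume_Ioi]
  exact ENNReal.zero_lt_top

theorem levyIntegrand_add_sub_levyIntegrand_add (r s t x : ℝ) :
    levyIntegrand r s x + levyIntegrand r t x - levyIntegrand r (s + t) x =
      (1 - Real.exp (-(s * x))) * (1 - Real.exp (-(t * x))) * x ^ (-r - 1) := by
  simp only [levyIntegrand, add_mul s t x, neg_add, Real.exp_add]
  ring

theorem integrableOn_levyIntegrand_add_sub (hr : 0 < r) (hr1 : r < 1) {s t : ℝ} (hs : 0 ≤ s)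
    (ht : 0 ≤ t) :
    IntegrableOn (fun x => levyIntegrand r s x + levyIntegrand r t x - levyIntegrand r (s + t) x)
      (Ioi 0) :=
  ((integrableOn_levyIntegrand hr hr1 hs).add (integrableOn_levyIntegrand hr hr1 ht)).sub
    (integrableOn_levyIntegrand hr hr1 (add_nonneg hs ht))

theorem integral_levyIntegrand_add_sub (hr : 0 < r) (hr1 : r < 1) {s t : ℝ} (hs : 0 < s)
    (ht : 0 < t) :
    ∫ x in Ioi 0, (levyIntegrand r s x + levyIntegrand r t x - levyIntegrand r (s + t) x) =
      (s ^ r + t ^ r - (s + t) ^ r) * ∫ x in Ioi 0, levyIntegrand r 1 x := by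
  have hint {u : ℝ} (hu : 0 < u) := integrableOn_levyIntegrand hr hr1 hu.le
  have hst := add_pos hs ht
  have hadd : IntegrableOn (fun x => levyIntegrand r s x + levyIntegrand r t x) (Ioi 0) :=
    (hint hs).add (hint ht)
  rw [integral_sub hadd (hint hst), integral_add (hint hs) (hint ht),
    integral_levyIntegrand hs, integral_levyIntegrand ht, integral_levyIntegrand hst]
  ring

theorem posSemidef_rpow_add_rpow_sub_rpow_add (hr : 0 < r) (hr1 : r ≤ 1) :
    (Matrix.of fun s t : Ioi (0 : ℝ) =>
      ((s ^ r + t ^ r - (s + t : ℝ) ^ r : ℝ) : ℂ)).PosSemidef := by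
  rcases hr1.eq_or_lt with rfl | hr1
  · simpa only [Real.rpow_one, sub_self, Complex.ofReal_zero] using! Matrix.PosSemidef.zero
  let φ (s : Ioi (0 : ℝ)) (x : ℝ) : ℂ := ((1 - Real.exp (-(s * x))) * √(x ^ (-r - 1)) : ℝ)
  have hφ_mul (s t : Ioi (0 : ℝ)) {x : ℝ} (hx : 0 < x) : conj (φ s x) * φ t x =
      (levyIntegrand r s x + levyIntegrand r t x - levyIntegrand r (s + t) x : ℝ) := by
    rw [levyIntegrand_add_sub_levyIntegrand_add, Complex.conj_ofReal, ← Complex.ofReal_mul,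
      mul_mul_mul_comm, Real.mul_self_sqrt (Real.rpow_nonneg hx.le _)]
  have hφ (s : Ioi (0 : ℝ)) : MemLp (φ s) 2 (volume.restrict (Ioi 0)) := by
    rw [memLp_two_iff_integrable_sq_norm (Measurable.aestronglyMeasurable (by fun_prop))]
    refine (integrableOn_levyIntegrand_add_sub hr hr1 s.2.le s.2.le).congr_fun (fun x hx => ?_)
      measurableSet_Ioi
    exact Complex.ofReal_injective ((hφ_mul s s hx).symm.trans
      ((Complex.conj_mul' _).trans (Complex.ofReal_pow _ _).symm))
  have hc := integral_levyIntegrand_one_pos hr hr1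
  convert! (posSemidef_integral_conj_mul hφ).smul (inv_nonneg.2 hc.le) using 1
  ext s t
  rw [Matrix.of_apply, Matrix.smul_apply, Matrix.of_apply,
    setIntegral_congr_fun measurableSet_Ioi fun x hx => hφ_mul s t hx, integral_complex_ofReal,
    integral_levyIntegrand_add_sub hr hr1 s.2 t.2, Complex.real_smul, ← Complex.ofReal_mul,
    mul_comm _ (integral _ _), inv_mul_cancel_left₀ hc.ne']

end Levy

section ApproxDirac

/-- The densities `φ i` approximate the Dirac mass at `x₀` along `l`: they are nonnegative with
total mass one, and their supports shrink to `x₀`. -/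
structure IsApproxDirac {ι X : Type*} [TopologicalSpace X] [MeasurableSpace X] (φ : ι → X → ℝ)
    (l : Filter ι) (μ : Measure X) (x₀ : X) : Prop where
  nonneg : ∀ i x, 0 ≤ φ i x
  integral_eq_one : ∀ i, ∫ x, φ i x ∂μ = 1
  tendsto_support : Tendsto (fun i => Function.support (φ i)) l (𝓝 x₀).smallSets

namespace IsApproxDirac

variable {ι X Y E : Type*} [TopologicalSpace X] [MeasurableSpace X] [TopologicalSpace Y]
  [MeasurableSpace Y] [NormedAddCommGroup E] [NormedSpace ℝ E] {l : Filter ι} {μ : Measure X}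
  {ν : Measure Y} {φ : ι → X → ℝ} {ψ : ι → Y → ℝ} {x₀ : X} {y₀ : Y}

theorem prod [SFinite μ] [SFinite ν] (hφ : IsApproxDirac φ l μ x₀) (hψ : IsApproxDirac ψ l ν y₀) :
    IsApproxDirac (fun i z => φ i z.1 * ψ i z.2) l (μ.prod ν) (x₀, y₀) where
  nonneg i z := mul_nonneg (hφ.nonneg i z.1) (hψ.nonneg i z.2)
  integral_eq_one i := by
    rw [integral_prod_mul, hφ.integral_eq_one, hψ.integral_eq_one, one_mul]
  tendsto_support := by
    refine tendsto_smallSets_iff.2 fun s hs => ?_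
    obtain ⟨u, hu, v, hv, huv⟩ := mem_nhds_prod_iff.1 hs
    filter_upwards [tendsto_smallSets_iff.1 hφ.tendsto_support u hu,
      tendsto_smallSets_iff.1 hψ.tendsto_support v hv] with i hi hi' z hz
    exact huv ⟨hi (left_ne_zero_of_mul hz), hi' (right_ne_zero_of_mul hz)⟩

theorem tendsto_integral_smul [CompleteSpace E] (hφ : IsApproxDirac φ l μ x₀)
    {g : X → E} (hg : ContinuousAt g x₀) (hφg : ∀ i, Integrable (fun x => φ i x • g x) μ) :
    Tendsto (fun i => ∫ x, φ i x • g x ∂μ) l (𝓝 (g x₀)) := by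
  refine Metric.tendsto_nhds.2 fun ε hε => ?_
  have hnear : {x | dist (g x) (g x₀) ≤ ε / 2} ∈ 𝓝 x₀ :=
    hg (Metric.closedBall_mem_nhds _ (half_pos hε))
  filter_upwards [tendsto_smallSets_iff.1 hφ.tendsto_support _ hnear] with i hi
  have hφi : Integrable (φ i) μ :=
    .of_integral_ne_zero (by rw [hφ.integral_eq_one]; exact one_ne_zero)
  have hsub : ∫ x, φ i x • g x ∂μ - g x₀ = ∫ x, φ i x • (g x - g x₀) ∂μ := by
    simp only [smul_sub]
    rw [integral_sub (hφg i) (hφi.smul_const _), integral_smul_const, hφ.integral_eq_one, one_smul]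
  have hbound (x : X) : ‖φ i x • (g x - g x₀)‖ ≤ φ i x * (ε / 2) := by
    rw [norm_smul, Real.norm_of_nonneg (hφ.nonneg i x), ← dist_eq_norm]
    by_cases hx : φ i x = 0
    · simp only [hx, zero_mul, le_refl]
    · exact mul_le_mul_of_nonneg_left (hi hx) (hφ.nonneg i x)
  calc dist (∫ x, φ i x • g x ∂μ) (g x₀)
      = ‖∫ x, φ i x • (g x - g x₀) ∂μ‖ := by rw [dist_eq_norm, hsub]
    _ ≤ ∫ x, φ i x * (ε / 2) ∂μ :=
      norm_integral_le_of_norm_le (hφi.mul_const _) (.of_forall hbound)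
    _ = ε / 2 := by rw [integral_mul_const, hφ.integral_eq_one, one_mul]
    _ < ε := half_lt_self hε

end IsApproxDirac

end ApproxDirac

/-- The continuous analogue of an infinite Hankel matrix: the kernel `h (s + t)` on `(0, ∞)`, viewed
as a matrix so that `Matrix.PosSemidef` expresses positivity of all its finite quadratic forms. -/
def hankelMatrix (h : ℝ → ℂ) : Matrix (Ioi (0 : ℝ)) (Ioi (0 : ℝ)) ℂ :=
  .of fun s t => h (s + t)

section Hankel

variable {h : ℝ → ℂ} {f g : ℝ → ℂ}

theorem IsTestFun.zero : IsTestFun fun _ => 0 :=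
  ⟨contDiff_const, HasCompactSupport.zero, by simp⟩

theorem IsTestFun.add (hf : IsTestFun f) (hg : IsTestFun g) : IsTestFun fun x => f x + g x :=
  ⟨hf.1.add hg.1, hf.2.1.add hg.2.1, (tsupport_add f g).trans (union_subset hf.2.2 hg.2.2)⟩

theorem IsTestFun.const_mul (c : ℂ) (hf : IsTestFun f) : IsTestFun fun x => c * f x :=
  ⟨contDiff_const.mul hf.1, hf.2.1.mul_left, tsupport_mul_subset_right.trans hf.2.2⟩

theorem IsTestFun.sum {ι : Type*} {s : Finset ι} {f : ι → ℝ → ℂ} (hf : ∀ i ∈ s, IsTestFun (f i)) :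
    IsTestFun fun x => ∑ i ∈ s, f i x := by
  simp only [← Finset.sum_apply]
  exact Finset.sum_induction f IsTestFun (fun _ _ => .add) .zero hf

theorem exists_isTestFun_isApproxDirac {s : ℝ} (hs : 0 < s) :
    ∃ ρ : ℕ → ℝ → ℝ, (∀ n, IsTestFun fun x => (ρ n x : ℂ)) ∧ IsApproxDirac ρ atTop volume s := by
  let b (n : ℕ) : ContDiffBump s :=
    ⟨s / 2 / (n + 2), s / 2 / (n + 1), by positivity, by gcongr; norm_num⟩
  have hlim : Tendsto (fun n => (b n).rOut) atTop (𝓝 0) := by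
    simpa only [mul_one_div, mul_zero, b] using
      tendsto_one_div_add_atTop_nhds_zero_nat.const_mul (s / 2)
  have hlt (n : ℕ) : (b n).rOut < s :=
    (div_le_self (half_pos hs).le (by simp)).trans_lt (half_lt_self hs)
  refine ⟨fun n => (b n).normed volume, fun n => ⟨?_, ?_, ?_⟩, fun n => (b n).nonneg_normed,
    fun n => (b n).integral_normed, ?_⟩
  · exact Complex.ofRealCLM.contDiff.comp (b n).contDiff_normed
  · exact (b n).hasCompactSupport_normed.comp_left Complex.ofReal_zero
  · refine (tsupport_comp_subset Complex.ofReal_zero _).trans ?_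
    rw [(b n).tsupport_normed_eq, Real.closedBall_eq_Icc]
    exact fun x hx => (sub_pos.2 (hlt n)).trans_le hx.1
  · refine tendsto_smallSets_iff.2 fun u hu => ?_
    obtain ⟨ε, hε, hεu⟩ := Metric.mem_nhds_iff.1 hu
    filter_upwards [hlim.eventually_lt_const hε] with n hn
    rw [ContDiffBump.support_normed_eq]
    exact (Metric.ball_subset_ball hn.le).trans hεu

theorem integrable_hankel (hc : ContinuousOn h (Ioi 0)) (hf : IsTestFun f) (hg : IsTestFun g) :
    Integrable fun z : ℝ × ℝ => h (z.1 + z.2) * f z.2 * conj (g z.1) := by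
  set F : ℝ × ℝ → ℂ := fun z => h (z.1 + z.2) * f z.2 * conj (g z.1)
  have hsupp : Function.support F ⊆ tsupport g ×ˢ tsupport f := fun z hz =>
    ⟨subset_tsupport g ((map_ne_zero _).1 (right_ne_zero_of_mul hz)),
      subset_tsupport f (right_ne_zero_of_mul (left_ne_zero_of_mul hz))⟩
  have htsupp : tsupport F ⊆ tsupport g ×ˢ tsupport f :=
    closure_minimal hsupp ((isClosed_tsupport g).prod (isClosed_tsupport f))
  have hFc : ContinuousOn F (Ioi 0 ×ˢ Ioi 0) := by
    have hfc := hf.1.continuous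
    have hgc := hg.1.continuous
    have hhc : ContinuousOn (fun z : ℝ × ℝ => h (z.1 + z.2)) (Ioi 0 ×ˢ Ioi 0) :=
      hc.comp (by fun_prop) fun z hz => mem_Ioi.2 (add_pos hz.1 hz.2)
    exact (hhc.mul (by fun_prop)).mul (by fun_prop)
  refine Continuous.integrable_of_hasCompactSupport ?_ ?_
  · exact hFc.continuous_of_tsupport_subset (isOpen_Ioi.prod isOpen_Ioi)
      (htsupp.trans (prod_mono hg.2.2 hf.2.2))
  · exact (hg.2.1.isCompact.prod hf.2.1.isCompact).of_isClosed_subset (isClosed_tsupport _) htsupp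

theorem hankelQF_eq_integral_prod (hc : ContinuousOn h (Ioi 0)) (hf : IsTestFun f) :
    hankelQF h f = ∫ z : ℝ × ℝ, h (z.1 + z.2) * f z.2 * conj (f z.1) := by
  have hf0 {x : ℝ} (hx : x ∉ Ioi 0) : f x = 0 :=
    image_eq_zero_of_notMem_tsupport fun h => hx (hf.2.2 h)
  rw [Measure.volume_eq_prod, integral_prod _ (integrable_hankel hc hf hf), hankelQF,
    setIntegral_eq_integral_of_forall_compl_eq_zero fun t ht => by simp [hf0 ht]]
  refine integral_congr_ae (.of_forall fun t => ?_)
  exact setIntegral_eq_integral_of_forall_compl_eq_zero fun s hs => by simp [hf0 hs]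

theorem conj_hankelQF (hc : ContinuousOn h (Ioi 0)) (hf : IsTestFun f) :
    conj (hankelQF h f) = hankelQF (fun t => conj (h t)) f := by
  have hconj : ContinuousOn (fun t => conj (h t)) (Ioi 0) := hc.star
  rw [hankelQF_eq_integral_prod hc hf, hankelQF_eq_integral_prod hconj hf, ← integral_conj,
    Measure.volume_eq_prod, ← integral_prod_swap]
  refine integral_congr_ae (.of_forall fun z => ?_)
  simp only [Prod.fst_swap, Prod.snd_swap, map_mul, Complex.conj_conj, add_comm z.2]
  ring

theorem hankelQF_neg : hankelQF (fun t => -h t) f = -hankelQF h f := by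
  simp only [hankelQF, neg_mul, integral_neg]

theorem hankelQF_sum (hc : ContinuousOn h (Ioi 0)) {ι : Type*} {f : ι → ℝ → ℂ}
    (hf : ∀ i, IsTestFun (f i)) (x : ι →₀ ℂ) :
    hankelQF h (fun u => ∑ i ∈ x.support, x i * f i u) = x.sum fun i xi => x.sum fun j xj =>
      star xi * (∫ z : ℝ × ℝ, h (z.1 + z.2) * f j z.2 * conj (f i z.1)) * xj := by
  rw [hankelQF_eq_integral_prod hc (.sum fun i _ => (hf i).const_mul _)]
  simp only [Finsupp.sum, ← integral_const_mul, ← integral_mul_const]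
  have hint (i j : ι) : Integrable fun z : ℝ × ℝ =>
      star (x i) * (h (z.1 + z.2) * f j z.2 * conj (f i z.1)) * x j :=
    ((integrable_hankel hc (hf j) (hf i)).const_mul _).mul_const _
  simp only [← integral_finsetSum, hint, integrable_finsetSum, implies_true]
  refine integral_congr_ae (.of_forall fun z => ?_)
  simp only [map_sum, Finset.mul_sum, Finset.sum_mul, map_mul, RCLike.star_def]
  exact Finset.sum_congr rfl fun i _ => Finset.sum_congr rfl fun j _ => by ring

theorem hankelQF_nonneg_of_posSemidef (hc : ContinuousOn h (Ioi 0))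
    (hh : (hankelMatrix h).PosSemidef) (hf : IsTestFun f) : 0 ≤ hankelQF h f := by
  have : IsFiniteMeasureOnCompacts ((volume : Measure ℝ).comap ((↑) : Ioi (0 : ℝ) → ℝ)) :=
    .comap' _ continuous_subtype_val (.subtype_coe measurableSet_Ioi)
  have hfc : HasCompactSupport fun s : Ioi (0 : ℝ) => f s := by
    refine IsCompact.of_isClosed_subset ?_ (isClosed_tsupport _)
      (tsupport_comp_subset_preimage f continuous_subtype_val)
    rw [Topology.IsInducing.subtypeVal.isCompact_preimage_iff
      (hf.2.2.trans Subtype.range_coe.superset)]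
    exact hf.2.1
  have hcK : Continuous fun p : Ioi (0 : ℝ) × Ioi (0 : ℝ) => hankelMatrix h p.1 p.2 :=
    hc.comp_continuous (by fun_prop) fun p => mem_Ioi.2 (add_pos p.1.2 p.2.2)
  have hnonneg := integral_integral_nonneg_of_posSemidef (μ := (volume : Measure ℝ).comap (↑)) hh
    hcK (hf.1.continuous.comp continuous_subtype_val) hfc
  have hinner (t : Ioi (0 : ℝ)) := integral_subtype_comap (μ := volume) (measurableSet_Ioi (a := 0))
    fun s : ℝ => h (t + s) * f s * conj (f t)
  exact hnonneg.trans_eq <| (integral_congr_ae (.of_forall hinner)).trans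
    (integral_subtype_comap measurableSet_Ioi fun t => ∫ s in Ioi 0, h (t + s) * f s * conj (f t))

theorem tendsto_integral_hankel_isApproxDirac (hc : ContinuousOn h (Ioi 0)) {ι : Type*}
    {l : Filter ι} {ρ σ : ι → ℝ → ℝ} {s t : ℝ} (hst : 0 < s + t) (hρ : IsApproxDirac ρ l volume s)
    (hσ : IsApproxDirac σ l volume t) (hρt : ∀ n, IsTestFun fun x => (ρ n x : ℂ))
    (hσt : ∀ n, IsTestFun fun x => (σ n x : ℂ)) :
    Tendsto (fun n => ∫ z : ℝ × ℝ, h (z.1 + z.2) * σ n z.2 * conj (ρ n z.1 : ℂ)) l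
      (𝓝 (h (s + t))) := by
  have hsmul (n : ι) (z : ℝ × ℝ) : h (z.1 + z.2) * σ n z.2 * conj (ρ n z.1 : ℂ) =
      (ρ n z.1 * σ n z.2) • h (z.1 + z.2) := by
    rw [Complex.conj_ofReal, Complex.real_smul, Complex.ofReal_mul]
    ring
  have hint (n : ι) := integrable_hankel hc (hσt n) (hρt n)
  simp only [hsmul] at hint ⊢
  have hcont : ContinuousAt (fun z : ℝ × ℝ => h (z.1 + z.2)) (s, t) :=
    (hc.continuousAt (Ioi_mem_nhds hst)).comp (f := fun z : ℝ × ℝ => z.1 + z.2) (by fun_prop)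
  exact (hρ.prod hσ).tendsto_integral_smul hcont hint

theorem sum_hankelMatrix_nonneg (hc : ContinuousOn h (Ioi 0))
    (hQ : ∀ f, IsTestFun f → 0 ≤ hankelQF h f) (x : Ioi (0 : ℝ) →₀ ℂ) :
    0 ≤ x.sum fun i xi => x.sum fun j xj => star xi * hankelMatrix h i j * xj := by
  choose ρ hρt hρ using fun s : Ioi (0 : ℝ) => exists_isTestFun_isApproxDirac s.2
  refine ge_of_tendsto' (tendsto_finsetSum _ fun i _ => tendsto_finsetSum _ fun j _ =>
    ((tendsto_integral_hankel_isApproxDirac hc (add_pos i.2 j.2) (hρ i) (hρ j) (hρt i)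
      (hρt j)).const_mul _).mul_const _) fun n => ?_
  exact (hQ _ (.sum fun i _ => (hρt i n).const_mul (x i))).trans_eq
    (hankelQF_sum hc (fun i => hρt i n) x)

theorem hankelQF_nonneg_iff_posSemidef (hc : ContinuousOn h (Ioi 0)) :
    (∀ f, IsTestFun f → 0 ≤ hankelQF h f) ↔ (hankelMatrix h).PosSemidef := by
  refine ⟨fun hQ => ⟨?_, sum_hankelMatrix_nonneg hc hQ⟩,
    fun hh _ => hankelQF_nonneg_of_posSemidef hc hh⟩
  have hreal {t : ℝ} (ht : 0 < t) : 0 ≤ h t := by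
    simpa [hankelMatrix] using
      sum_hankelMatrix_nonneg hc hQ (Finsupp.single ⟨t / 2, half_pos ht⟩ 1)
  refine Matrix.IsHermitian.ext fun s t => ?_
  rw [hankelMatrix, Matrix.of_apply, Matrix.of_apply, add_comm]
  exact (IsSelfAdjoint.of_nonneg (hreal (add_pos s.2 t.2))).star_eq

theorem exists_hankelQF_neg {h : ℝ → ℝ} (hc : ContinuousOn h (Ioi 0))
    (hh : ¬(hankelMatrix fun t => h t).PosSemidef) :
    ∃ f, IsTestFun f ∧ hankelQF (fun t => h t) f < 0 := by
  have hcC : ContinuousOn (fun t => (h t : ℂ)) (Ioi 0) := by fun_prop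
  rw [← hankelQF_nonneg_iff_posSemidef hcC] at hh
  push Not at hh
  obtain ⟨f, hf, hneg⟩ := hh
  have hself := conj_hankelQF hcC hf
  simp only [Complex.conj_ofReal] at hself
  obtain ⟨q, hq⟩ := Complex.conj_eq_iff_real.1 hself
  refine ⟨f, hf, ?_⟩
  rw [hq] at hneg ⊢
  norm_cast at hneg ⊢
  simpa using hneg

theorem exists_hankelQF_pos {h : ℝ → ℝ} (hc : ContinuousOn h (Ioi 0)) {t : ℝ} (ht : 0 < t)
    (hpos : 0 < h t) : ∃ f, IsTestFun f ∧ 0 < hankelQF (fun t => h t) f := by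
  have hneg : ¬(hankelMatrix fun t => ((-h t : ℝ) : ℂ)).PosSemidef := fun hh => by
    have hdiag : 0 ≤ ((-h (t / 2 + t / 2) : ℝ) : ℂ) := hh.diag_nonneg (i := ⟨t / 2, half_pos ht⟩)
    rw [add_halves, Complex.zero_le_real] at hdiag
    linarith
  obtain ⟨f, hf, hQ⟩ := exists_hankelQF_neg (h := fun t => -h t) hc.neg hneg
  refine ⟨f, hf, ?_⟩
  simpa only [Complex.ofReal_neg, hankelQF_neg, neg_lt_zero] using hQ

theorem sq_le_mul_of_posSemidef_hankelMatrix {h : ℝ → ℝ}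
    (hh : (hankelMatrix fun t => h t).PosSemidef) {s t : ℝ} (hs : 0 < s) (ht : 0 < t) :
    h (s + t) ^ 2 ≤ h (2 * s) * h (2 * t) := by
  have hminor := apply_mul_apply_le_of_posSemidef hh ⟨s, hs⟩ ⟨t, ht⟩
  simp only [hankelMatrix, Matrix.of_apply, add_comm t s, ← two_mul, ← sq] at hminor
  exact_mod_cast hminor

end Hankel

section StretchedExp

theorem posSemidef_hankelMatrix_exp_neg_rpow {r : ℝ} (hr : 0 < r) (hr1 : r ≤ 1) :
    (hankelMatrix fun t => (Real.exp (-(t ^ r)) : ℝ)).PosSemidef := by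
  have hexp := posSemidef_map_exp (posSemidef_rpow_add_rpow_sub_rpow_add hr hr1)
  convert! (posSemidef_gram (𝕜 := ℂ) fun s : Ioi (0 : ℝ) =>
    (Real.exp (-(s ^ r : ℝ)) : ℂ)).hadamard hexp
  ext s t
  simp only [hankelMatrix, Matrix.of_apply, Matrix.hadamard_apply, Matrix.gram_apply,
    Matrix.map_apply, RCLike.inner_apply, Complex.conj_ofReal, ← Complex.ofReal_exp,
    ← Complex.ofReal_mul, ← Real.exp_add]
  ring_nf

theorem not_posSemidef_hankelMatrix_exp_neg_rpow {r : ℝ} (hr : 1 < r) :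
    ¬(hankelMatrix fun t => (Real.exp (-(t ^ r)) : ℝ)).PosSemidef := fun hh => by
  have hle := sq_le_mul_of_posSemidef_hankelMatrix hh one_pos two_pos
  rw [← Real.exp_add, ← Real.exp_nat_mul, Real.exp_le_exp] at hle
  have hconv := (strictConvexOn_rpow hr).2 (x := 2) (y := 4) (by simp) (by simp) (by norm_num)
    (one_half_pos (α := ℝ)) (one_half_pos (α := ℝ)) (by norm_num)
  norm_num [smul_eq_mul] at hconv hle
  linarith

end StretchedExp

end

/-- The Hankel form with kernel `h(t) = e^{-t^r}` (`r > 0`) is positive iff `r ≤ 1`;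
for `r > 1` it is not sign-definite. -/
theorem hankel_stretched_exp_kernel (r : ℝ) (hr : 0 < r) :
    ((r ≤ 1) → ∀ f : ℝ → ℂ, IsTestFun f →
      0 ≤ hankelQF (fun t : ℝ => ((Real.exp (-(t ^ r)) : ℝ) : ℂ)) f)
    ∧ ((1 < r) →
      (∃ fp : ℝ → ℂ, IsTestFun fp ∧
        0 < hankelQF (fun t : ℝ => ((Real.exp (-(t ^ r)) : ℝ) : ℂ)) fp) ∧
      (∃ fm : ℝ → ℂ, IsTestFun fm ∧
        hankelQF (fun t : ℝ => ((Real.exp (-(t ^ r)) : ℝ) : ℂ)) fm < 0)) := by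
  have hcont : Continuous fun t : ℝ => Real.exp (-(t ^ r)) := by
    have := Real.continuous_rpow_const hr.le
    fun_prop
  refine ⟨fun hr1 => ?_, fun hr1 => ⟨?_, ?_⟩⟩
  · exact (hankelQF_nonneg_iff_posSemidef
      (Complex.continuous_ofReal.comp hcont).continuousOn).2
      (posSemidef_hankelMatrix_exp_neg_rpow hr hr1)
  · exact exists_hankelQF_pos hcont.continuousOn one_pos (Real.exp_pos _)
  · exact exists_hankelQF_neg hcont.continuousOn (not_posSemidef_hankelMatrix_exp_neg_rpow hr1)
end
end
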